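/- Let H be a real Hilbert space, let 0 < c₁ < ∞, let s ∈ {−1,1}, let J be a unitary operator on H, and let n ∈ H be a unit vector. Then for every w ∈ M(H) and every ε ∈ (0, c₁) there exist λ ∈ (0,ε) and a ∈ M(H) such that W_{λ,c₁}[s,n,J;a] w ≠ W_{λ,∞}[s,n,J;a] w. -/

import Mathlib

open scoped InnerProductSpace

/-- Generalized Lorentz transform `W_{λ,c}[s,n,J]` on `M(H) = ℝ × H` (case `λ < ∞`, `c < ∞`). -/
noncomputable def Wfin {H : Type*} [NormedAddCommGroup H] [InnerProductSpace ℝ H]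
    (lam c s : ℝ) (n : H) (J : H ≃ₗᵢ[ℝ] H) (w : ℝ × H) : ℝ × H :=
  ((s * w.1 - lam / c ^ 2 * ⟪n, w.2⟫_ℝ) / Real.sqrt |1 - lam ^ 2 / c ^ 2|,
    J (((lam * w.1 - s * ⟪n, w.2⟫_ℝ) / Real.sqrt |1 - lam ^ 2 / c ^ 2|) • n
      + (w.2 - ⟪n, w.2⟫_ℝ • n)))

/-- Generalized Lorentz transform `W_{λ,∞}[s,n,J]` on `M(H) = ℝ × H` (case `c = ∞`). -/
noncomputable def Wgal {H : Type*} [NormedAddCommGroup H] [InnerProductSpace ℝ H]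
    (lam s : ℝ) (n : H) (J : H ≃ₗᵢ[ℝ] H) (w : ℝ × H) : ℝ × H :=
  (s * w.1, J ((lam * w.1 - s * ⟪n, w.2⟫_ℝ) • n + (w.2 - ⟪n, w.2⟫_ℝ • n)))

/-- Generalized Lorentz transform `W_{∞,c}[s,n,J]` on `M(H) = ℝ × H` (case `λ = ∞`). -/
noncomputable def Wtach {H : Type*} [NormedAddCommGroup H] [InnerProductSpace ℝ H]
    (c s : ℝ) (n : H) (J : H ≃ₗᵢ[ℝ] H) (w : ℝ × H) : ℝ × H :=
  (-⟪n, w.2⟫_ℝ / c, J ((c * w.1) • n + (w.2 - ⟪n, w.2⟫_ℝ • n)))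

/-! Galilean transforms preserve simultaneity, while a Lorentz transform with `λ ≠ 0` shifts the
time of every purely spatial event `(0, x)` with `⟪n, x⟫ ≠ 0`. The translation `a` can carry any `w`
to such an event, for instance `(0, n)`. -/

section

variable {H : Type*} [NormedAddCommGroup H] [InnerProductSpace ℝ H]
  {lam c s : ℝ} {n x : H} {J : H ≃ₗᵢ[ℝ] H}

theorem Wgal_zero_left_fst : (Wgal lam s n J (0, x)).1 = 0 :=
  mul_zero s

theorem Wfin_zero_left_fst :
    (Wfin lam c s n J (0, x)).1 = -(lam / c ^ 2 * ⟪n, x⟫_ℝ) / √|1 - lam ^ 2 / c ^ 2| := by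
  simp only [Wfin, mul_zero, zero_sub]

theorem sqrt_abs_one_sub_sq_div_sq_ne_zero (hc : c ≠ 0) (hlc : lam ^ 2 ≠ c ^ 2) :
    √|1 - lam ^ 2 / c ^ 2| ≠ 0 := by
  have hratio : lam ^ 2 / c ^ 2 ≠ 1 := fun h => hlc ((div_eq_one_iff_eq (pow_ne_zero 2 hc)).mp h)
  exact Real.sqrt_ne_zero'.mpr (abs_pos.mpr (sub_ne_zero.mpr hratio.symm))

theorem Wfin_zero_left_fst_eq_zero_iff (hc : c ≠ 0) (hlam : lam ≠ 0) (hlc : lam ^ 2 ≠ c ^ 2) :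
    (Wfin lam c s n J (0, x)).1 = 0 ↔ ⟪n, x⟫_ℝ = 0 := by
  have hcoeff : lam / c ^ 2 ≠ 0 := div_ne_zero hlam (pow_ne_zero 2 hc)
  rw [Wfin_zero_left_fst, div_eq_zero_iff, neg_eq_zero, mul_eq_zero,
    or_iff_left (sqrt_abs_one_sub_sq_div_sq_ne_zero hc hlc), or_iff_right hcoeff]

theorem Wfin_zero_left_ne_Wgal (hc : c ≠ 0) (hlam : lam ≠ 0) (hlc : lam ^ 2 ≠ c ^ 2)
    (hx : ⟪n, x⟫_ℝ ≠ 0) : Wfin lam c s n J (0, x) ≠ Wgal lam s n J (0, x) := fun h =>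
  hx ((Wfin_zero_left_fst_eq_zero_iff hc hlam hlc).mp
    ((congrArg Prod.fst h).trans Wgal_zero_left_fst))

end

theorem stmt11_general {H : Type*} [NormedAddCommGroup H] [InnerProductSpace ℝ H]
    {lam c : ℝ} (hc : c ≠ 0) (hlam : lam ≠ 0) (hlc : lam ^ 2 ≠ c ^ 2)
    (s : ℝ) (J : H ≃ₗᵢ[ℝ] H) {n : H} (hn : n ≠ 0) (w : ℝ × H) :
    ∃ a : ℝ × H, Wfin lam c s n J (w + a) ≠ Wgal lam s n J (w + a) := by
  refine ⟨(0, n) - w, ?_⟩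
  rw [add_sub_cancel]
  exact Wfin_zero_left_ne_Wgal hc hlam hlc (inner_self_ne_zero.mpr hn)

/-- Corollary, case `c₂ = ∞`: for `0 < c₁ < ∞`, any `w ∈ M(H)` and any
`ε ∈ (0,c₁)` there exist `λ ∈ (0,ε)` and `a ∈ M(H)` with
`W_{λ,c₁}[s,n,J;a] w ≠ W_{λ,∞}[s,n,J;a] w`. -/
theorem stmt11 {H : Type*} [NormedAddCommGroup H] [InnerProductSpace ℝ H] [CompleteSpace H]
    (c₁ : ℝ) (hc₁ : 0 < c₁)
    (s : ℝ) (hs : s = 1 ∨ s = -1) (J : H ≃ₗᵢ[ℝ] H) (n : H) (hn : ‖n‖ = 1)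
    (w : ℝ × H) (ε : ℝ) (hε : 0 < ε) (hε' : ε < c₁) :
    ∃ lam : ℝ, 0 < lam ∧ lam < ε ∧ ∃ a : ℝ × H,
      Wfin lam c₁ s n J (w + a) ≠ Wgal lam s n J (w + a) := by
  have hn₀ : n ≠ 0 := norm_ne_zero_iff.mp (hn.symm ▸ one_ne_zero)
  have hlc : (ε / 2) ^ 2 ≠ c₁ ^ 2 := (pow_lt_pow_left₀ (by linarith) (by positivity) two_ne_zero).ne
  exact ⟨ε / 2, half_pos hε, half_lt_self hε,
    stmt11_general hc₁.ne' (half_pos hε).ne' hlc s J hn₀ w⟩
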